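/- arXiv:1711.09794 — 7 statements merged into one kernel-verified Lean document; each statement's English description precedes it below -/
import Mathlib

section
/- The shifted-conjugation operation on the infinite braid group obeys the left selfdistributivity law: for all β₁, β₂, β₃ ∈ B_∞ one has β₁ ▷ (β₂ ▷ β₃) = (β₁ ▷ β₂) ▷ (β₁ ▷ β₃). Moreover (B_∞, ▷) is not a left-spindle: β ▷ β ≠ β holds for every β ∈ B_∞; and it is not a left-rack: there is no β ∈ B_∞ with 1 ▷ β = 1, so the left translation y ↦ 1 ▷ y is not surjective. -/
/-!
Selfdistributivity is formal: for an endomorphism `s` of a group and an element `g`, the operation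
`a * s b * g * (s a)⁻¹` is selfdistributive as soon as `g` and `s g` satisfy the braid relation and
`g` commutes with the image of `s ∘ s`. Moreover `a ▷ a = a` forces `g = 1`, and `1 ▷ b = 1` forces
`g` to lie in the range of `s`. In the braid group the latter is impossible, because the permutation
of the strands induced by a shifted braid fixes the first strand, which `σ 0` moves.
-/

/-- The braid relations on generators indexed by `ℕ` (generator `i` stands for
the Artin generator `σ_{i+1}` of the paper). -/
def braidRels : Set (FreeGroup ℕ) :=
  {r | (∃ i j : ℕ, i + 2 ≤ j ∧
          r = .of i * .of j * (.of i)⁻¹ * (.of j)⁻¹) ∨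
       (∃ i : ℕ,
          r = .of i * .of (i + 1) * .of i *
              (.of (i + 1) * .of i * .of (i + 1))⁻¹)}

/-- The braid group on infinitely many strands. -/
abbrev Binf : Type := PresentedGroup braidRels

/-- `σ i` is the Artin generator `σ_{i+1}` of the paper (0-indexed). -/
def σ (i : ℕ) : Binf := PresentedGroup.of i

lemma mk_rel_eq_one {r : FreeGroup ℕ} (h : r ∈ braidRels) :
    PresentedGroup.mk braidRels r = 1 :=
  (QuotientGroup.eq_one_iff r).mpr (Subgroup.subset_normalClosure h)

lemma shift_lift_eq_one :
    ∀ r ∈ braidRels, FreeGroup.lift (fun n => σ (n + 1)) r = 1 := by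
  intro r hr
  have key : ∀ s ∈ braidRels, FreeGroup.lift (fun n => σ (n + 1)) s
      = PresentedGroup.mk braidRels (FreeGroup.map (· + 1) s) := by
    intro s _
    have : (FreeGroup.lift (fun n => σ (n + 1)) : FreeGroup ℕ →* Binf)
        = (PresentedGroup.mk braidRels).comp (FreeGroup.map (· + 1)) := by
      apply FreeGroup.ext_hom
      intro x
      simp [σ, PresentedGroup.of]
    rw [this]; rfl
  rw [key r hr]
  apply mk_rel_eq_one
  rcases hr with ⟨i, j, hij, rfl⟩ | ⟨i, rfl⟩
  · exact Or.inl ⟨i + 1, j + 1, by omega, by simp⟩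
  · exact Or.inr ⟨i + 1, by simp⟩

/-- The shift endomorphism of the braid group, mapping `σ i` to `σ (i+1)`. -/
def sh : Binf →* Binf := PresentedGroup.toGroup shift_lift_eq_one

@[simp] lemma sh_σ (i : ℕ) : sh (σ i) = σ (i + 1) :=
  PresentedGroup.toGroup.of shift_lift_eq_one

/-- The shifted-conjugation (selfdistributive) operation on `Binf`:
`β₁ ▷ β₂ = β₁ · sh β₂ · σ₁ · (sh β₁)⁻¹`. -/
def sc (β₁ β₂ : Binf) : Binf := β₁ * sh β₂ * σ 0 * (sh β₁)⁻¹

section ShiftedConj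

variable {G : Type*} [Group G] {s : G →* G} {g : G}

/-- Shifted conjugation in a group with a distinguished endomorphism `s` (the shift) and a
distinguished element `g` (the first generator). The operation `sc` is
`shiftedConj sh (σ 0)`. -/
def shiftedConj (s : G →* G) (g a b : G) : G := a * s b * g * (s a)⁻¹

lemma shiftedConj_one_left (b : G) : shiftedConj s g 1 b = s b * g := by
  simp [shiftedConj]

lemma shiftedConj_self_distrib (hbraid : g * s g * g = s g * g * s g)
    (hcomm : ∀ x, Commute g (s (s x))) (a b c : G) :
    shiftedConj s g a (shiftedConj s g b c) =
      shiftedConj s g (shiftedConj s g a b) (shiftedConj s g a c) := by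
  have cancel_a : (s (s a))⁻¹ * g * s (s a) = g := (hcomm a).symm.inv_mul_cancel
  have braid : g * s g * g * (s g)⁻¹ = s g * g := mul_inv_eq_of_eq_mul hbraid
  symm
  calc shiftedConj s g (shiftedConj s g a b) (shiftedConj s g a c)
      = a * s b * g * s (s c) * s g * ((s (s a))⁻¹ * g * s (s a)) * (s g)⁻¹ * (s (s b))⁻¹
          * (s a)⁻¹ := by
        simp only [shiftedConj, map_mul, map_inv]
        group
    _ = a * s b * (g * s (s c)) * s g * g * (s g)⁻¹ * (s (s b))⁻¹ * (s a)⁻¹ := by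
        rw [cancel_a]
        group
    _ = a * s b * s (s c) * (g * s g * g * (s g)⁻¹) * (s (s b))⁻¹ * (s a)⁻¹ := by
        rw [(hcomm c).eq]
        group
    _ = a * s b * s (s c) * s g * (g * (s (s b))⁻¹) * (s a)⁻¹ := by
        rw [braid]
        group
    _ = a * s b * s (s c) * s g * ((s (s b))⁻¹ * g) * (s a)⁻¹ := by
        rw [(hcomm b).inv_right.eq]
    _ = shiftedConj s g a (shiftedConj s g b c) := by
        simp only [shiftedConj, map_mul, map_inv]
        group

lemma shiftedConj_self_eq_iff {a : G} : shiftedConj s g a a = a ↔ g = 1 := by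
  rw [shiftedConj, mul_assoc, mul_assoc, mul_eq_left, ← mul_assoc, conj_eq_one_iff]

lemma exists_shiftedConj_one_eq_one_iff : (∃ b, shiftedConj s g 1 b = 1) ↔ g ∈ s.range := by
  simp only [shiftedConj_one_left, mul_eq_one_iff_eq_inv]
  exact s.range.inv_mem_iff

theorem braid_shelf_basic_general (hbraid : g * s g * g = s g * g * s g)
    (hcomm : ∀ x, Commute g (s (s x))) (hg : g ∉ s.range) :
    (∀ a b c : G, shiftedConj s g a (shiftedConj s g b c) =
      shiftedConj s g (shiftedConj s g a b) (shiftedConj s g a c)) ∧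
    (∀ a : G, shiftedConj s g a a ≠ a) ∧
    (¬ ∃ b : G, shiftedConj s g 1 b = 1) ∧
    ¬ Function.Surjective (fun b : G => shiftedConj s g 1 b) := by
  have not_rack : ¬ ∃ b, shiftedConj s g 1 b = 1 := mt exists_shiftedConj_one_eq_one_iff.mp hg
  have g_ne_one : g ≠ 1 := (ne_of_mem_of_not_mem s.range.one_mem hg).symm
  exact ⟨shiftedConj_self_distrib hbraid hcomm, fun _ => mt shiftedConj_self_eq_iff.mp g_ne_one,
    not_rack, fun surj => not_rack (surj 1)⟩

end ShiftedConj

section BraidGroup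

lemma σ_commute {i j : ℕ} (hij : i + 2 ≤ j) : Commute (σ i) (σ j) := by
  have h := PresentedGroup.one_of_mem (rels := braidRels) (Or.inl ⟨i, j, hij, rfl⟩)
  simp only [map_mul, map_inv] at h
  exact commutatorElement_eq_one_iff_commute.mp h

lemma σ_braid (i : ℕ) : σ i * σ (i + 1) * σ i = σ (i + 1) * σ i * σ (i + 1) :=
  PresentedGroup.mk_eq_mk_of_mul_inv_mem (Or.inr ⟨i, rfl⟩)

variable {G : Type*} [Group G]

lemma lift_eq_one_of_mem_braidRels {f : ℕ → G}
    (hcomm : ∀ i j, i + 2 ≤ j → Commute (f i) (f j))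
    (hbraid : ∀ i, f i * f (i + 1) * f i = f (i + 1) * f i * f (i + 1)) :
    ∀ r ∈ braidRels, FreeGroup.lift f r = 1 := by
  rintro _ (⟨i, j, hij, rfl⟩ | ⟨i, rfl⟩)
  · simpa [commutatorElement_def] using (hcomm i j hij).commutator_eq
  · simpa only [map_mul, map_inv, FreeGroup.lift_apply_of, mul_inv_eq_one] using hbraid i

lemma range_le_of_forall_σ_mem {φ : Binf →* G} {H : Subgroup G} (h : ∀ i, φ (σ i) ∈ H) :
    φ.range ≤ H := by
  rintro _ ⟨b, rfl⟩
  exact PresentedGroup.generated_by _ (H.comap φ) h b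

lemma σ_zero_commute_sh_sh (b : Binf) : Commute (σ 0) (sh (sh b)) := by
  have range_le : (sh.comp sh).range ≤ Subgroup.centralizer {σ 0} :=
    range_le_of_forall_σ_mem fun i => by
      simpa [Subgroup.mem_centralizer_singleton_iff] using
        (σ_commute (Nat.le_add_left 2 i)).symm.eq
  exact (Subgroup.mem_centralizer_singleton_iff.mp (range_le ⟨b, rfl⟩)).symm

end BraidGroup

section StrandPermutation

lemma swap_commute_swap {α : Type*} [DecidableEq α] {x y z t : α}
    (hxz : x ≠ z) (hxt : x ≠ t) (hyz : y ≠ z) (hyt : y ≠ t) :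
    Commute (Equiv.swap x y) (Equiv.swap z t) := by
  have h := Equiv.mul_swap_eq_swap_mul (Equiv.swap x y) z t
  rwa [Equiv.swap_apply_of_ne_of_ne hxz.symm hyz.symm,
    Equiv.swap_apply_of_ne_of_ne hxt.symm hyt.symm] at h

lemma swap_braid {α : Type*} [DecidableEq α] {x y z : α} (hxy : x ≠ y) (hyz : y ≠ z) :
    Equiv.swap x y * Equiv.swap y z * Equiv.swap x y =
      Equiv.swap y z * Equiv.swap x y * Equiv.swap y z := by
  obtain rfl | hxz := eq_or_ne x z
  · rw [Equiv.swap_comm y x]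
  · rw [Equiv.swap_mul_swap_mul_swap hxy hxz, Equiv.swap_comm x y, Equiv.swap_comm y z,
      Equiv.swap_mul_swap_mul_swap hyz.symm hxz.symm, Equiv.swap_comm]

/-- The permutation of the strands induced by a braid: the homomorphism that sends the generator
`σ i` to the transposition of `i` and `i + 1`. -/
def strandPerm : Binf →* Equiv.Perm ℕ :=
  PresentedGroup.toGroup (f := fun i => Equiv.swap i (i + 1)) <|
    lift_eq_one_of_mem_braidRels
      (fun _ _ _ => swap_commute_swap (by lia) (by lia) (by lia) (by lia))
      (fun _ => swap_braid (by lia) (by lia))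

@[simp] lemma strandPerm_σ (i : ℕ) : strandPerm (σ i) = Equiv.swap i (i + 1) :=
  PresentedGroup.toGroup.of _

lemma strandPerm_sh_zero (b : Binf) : strandPerm (sh b) 0 = 0 := by
  have range_le : (strandPerm.comp sh).range ≤ MulAction.stabilizer (Equiv.Perm ℕ) 0 :=
    range_le_of_forall_σ_mem fun i => by
      simpa using Equiv.swap_apply_of_ne_of_ne (by lia) (by lia)
  exact range_le ⟨b, rfl⟩

lemma σ_zero_notMem_range_sh : σ 0 ∉ sh.range := by
  rintro ⟨b, hb⟩
  simpa [hb] using strandPerm_sh_zero b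

end StrandPermutation

/-- `(Binf, sc)` is a left-shelf that is neither a left-spindle
nor a left-rack. -/
theorem braid_shelf_basic :
    (∀ β₁ β₂ β₃ : Binf, sc β₁ (sc β₂ β₃) = sc (sc β₁ β₂) (sc β₁ β₃)) ∧
    (∀ β : Binf, sc β β ≠ β) ∧
    (¬ ∃ β : Binf, sc 1 β = 1) ∧
    ¬ Function.Surjective (fun y : Binf => sc 1 y) :=
  braid_shelf_basic_general (σ_braid 0) σ_zero_commute_sh_sh σ_zero_notMem_range_sh
end

section
/- The braid shelf is left cancellative: for all β, γ, γ' ∈ B_∞, if β ▷ γ = β ▷ γ' then γ = γ'. -/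
/-- A sequence in a monoid satisfying the braid relations, i.e. the image of the Artin generators
under a homomorphism from the monoid of positive braids. -/
structure IsBraidSequence {M : Type*} [Monoid M] (s : ℕ → M) : Prop where
  commute {i j : ℕ} : i + 2 ≤ j → Commute (s i) (s j)
  braid (i : ℕ) : s i * s (i + 1) * s i = s (i + 1) * s i * s (i + 1)

/-- The product `s 0 * ⋯ * s (n - 1)`. For the Coxeter generators of a symmetric group this is the
standard Coxeter element; for a braid sequence it conjugates `s i` to `s (i + 1)`. -/
def coxeterProd {M : Type*} [Monoid M] (s : ℕ → M) (n : ℕ) : M :=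
  ((List.range n).map s).prod

lemma coxeterProd_succ {M : Type*} [Monoid M] (s : ℕ → M) (n : ℕ) :
    coxeterProd s (n + 1) = coxeterProd s n * s n :=
  List.prod_range_succ s n

namespace IsBraidSequence

section Monoid

variable {M : Type*} [Monoid M] {s : ℕ → M}

lemma commute_coxeterProd (hs : IsBraidSequence s) {n j : ℕ} (h : n + 1 ≤ j) :
    Commute (coxeterProd s n) (s j) := by
  refine Commute.list_prod_left _ _ fun x hx => ?_
  obtain ⟨i, hi, rfl⟩ := List.mem_map.mp hx
  have : i < n := List.mem_range.mp hi
  exact hs.commute (by omega)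

lemma semiconjBy_mul_succ (hs : IsBraidSequence s) (i : ℕ) :
    SemiconjBy (s i * s (i + 1)) (s i) (s (i + 1)) :=
  (hs.braid i).trans (mul_assoc _ _ _)

lemma semiconjBy_coxeterProd (hs : IsBraidSequence s) {n i : ℕ} (h : i + 2 ≤ n) :
    SemiconjBy (coxeterProd s n) (s i) (s (i + 1)) := by
  induction n, h using Nat.le_induction with
  | base =>
    rw [coxeterProd_succ, coxeterProd_succ, mul_assoc]
    exact (hs.commute_coxeterProd le_rfl).semiconjBy.mul_left (hs.semiconjBy_mul_succ i)
  | succ n hn ih =>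
    rw [coxeterProd_succ]
    exact ih.mul_left (hs.commute hn).symm.semiconjBy

end Monoid

section Group

variable {G : Type*} [Group G] {s : ℕ → G} {φ : G →* G}

lemma eventually_semiconjBy_shift (hs : IsBraidSequence s)
    (hφ : ∀ i, φ (s i) = s (i + 1)) {g : G} (hg : g ∈ Subgroup.closure (Set.range s)) :
    ∀ᶠ n in Filter.atTop, SemiconjBy (coxeterProd s n) g (φ g) := by
  induction hg using Subgroup.closure_induction with
  | mem x hx =>
    obtain ⟨i, rfl⟩ := hx
    filter_upwards [Filter.eventually_ge_atTop (i + 2)] with n hn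
    exact hφ i ▸ hs.semiconjBy_coxeterProd hn
  | one => simp
  | mul x y _ _ hx hy =>
    filter_upwards [hx, hy] with n hxn hyn
    exact map_mul φ x y ▸ hxn.mul_right hyn
  | inv x _ hx =>
    filter_upwards [hx] with n hxn
    exact map_inv φ x ▸ hxn.inv_right

lemma isConj_shift (hs : IsBraidSequence s)
    (hφ : ∀ i, φ (s i) = s (i + 1)) {g : G} (hg : g ∈ Subgroup.closure (Set.range s)) :
    IsConj g (φ g) :=
  let ⟨n, hn⟩ := (hs.eventually_semiconjBy_shift hφ hg).exists
  ⟨toUnits (coxeterProd s n), hn⟩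

end Group

end IsBraidSequence

lemma injective_of_forall_isConj {G : Type*} [Group G] {φ : G →* G}
    (h : ∀ g, IsConj g (φ g)) : Function.Injective φ :=
  (injective_iff_map_eq_one φ).mpr fun g hg => isConj_one_left.mp (hg ▸ h g)

lemma isBraidSequence_σ : IsBraidSequence σ where
  commute {i j} hij := by
    have hrel := mk_rel_eq_one (Or.inl ⟨i, j, hij, rfl⟩)
    simp only [map_mul, map_inv] at hrel
    exact mul_inv_eq_iff_eq_mul.mp (mul_inv_eq_one.mp hrel)
  braid i := by
    have hrel := mk_rel_eq_one (Or.inr ⟨i, rfl⟩)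
    simp only [map_mul, map_inv] at hrel
    exact mul_inv_eq_one.mp hrel

lemma mem_closure_range_σ (γ : Binf) : γ ∈ Subgroup.closure (Set.range σ) :=
  PresentedGroup.generated_by _ _ (fun i => Subgroup.subset_closure (Set.mem_range_self i)) γ

lemma sh_injective : Function.Injective sh :=
  injective_of_forall_isConj fun γ =>
    isBraidSequence_σ.isConj_shift sh_σ (mem_closure_range_σ γ)

/-- the braid shelf is left cancellative. -/
theorem braid_shelf_left_cancellative (β γ γ' : Binf) (h : sc β γ = sc β γ') :
    γ = γ' := by
  have hsh : sh γ = sh γ' := by simpa [sc] using h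
  exact sh_injective hsh
end

section
/- Shifted product formula: let n ≥ 2, let (β₁, …, βₙ) ∈ B_∞ⁿ, and let w = (i₁, …, i_k) be a finite sequence of indices with 1 ≤ i_j ≤ n−1. Define the action of a single index i on a sequence by (β₁, …, βₙ) • i := (β₁, …, β_{i−1}, β_i ▷ β_{i+1}, β_i, β_{i+2}, …, βₙ), and let (β₁, …, βₙ) • w be the result of acting letter by letter. Then ∏^sh((β₁, …, βₙ) • w) = ∏^sh(β₁, …, βₙ) · σ_{i₁} ⋯ σ_{i_k}, where ∏^sh(β₁, …, βₙ) := β₁ · sh(β₂) ⋯ sh^{n−1}(βₙ). -/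
/-- The shifted product `∏^sh(β₁, …, βₙ) = β₁ · sh β₂ ⋯ sh^{n-1} βₙ`. -/
def shProd : List Binf → Binf
  | [] => 1
  | a :: t => a * sh (shProd t)

/-- Action of a single (0-indexed) letter `i` on a sequence of braids:
positions `i` and `i+1` become `(βᵢ ▷ β_{i+1}, βᵢ)` (the index `i` here
corresponds to the paper's index `i+1`). -/
def act1 : ℕ → List Binf → List Binf
  | 0, a :: b :: t => sc a b :: a :: t
  | n + 1, a :: t => a :: act1 n t
  | _, l => l

/-- Action of a word (list of 0-indexed letters), letter by letter. -/
def actW (l : List Binf) : List ℕ → List Binf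
  | [] => l
  | i :: w => actW (act1 i l) w

/-! The operation `sc` is designed so that `sc a b * sh a = a * sh b * σ 0`. Replacing the leading
pair `a, b` of a sequence by `sc a b, a` thus inserts a factor `σ 0` after the second factor of the
shifted product. All later factors lie in the image of `sh ∘ sh`, whose elements commute with
`σ 0`, so the new factor can be moved to the far right. A letter further along the sequence is
reduced to this case by shifting, which turns `σ i` into `σ (i + 1)`. -/

lemma commute_σ {i j : ℕ} (h : i + 2 ≤ j) : Commute (σ i) (σ j) :=
  commutatorElement_eq_one_iff_commute.mp (mk_rel_eq_one (Or.inl ⟨i, j, h, rfl⟩))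

lemma sh_iterate_σ (k i : ℕ) : sh^[k] (σ i) = σ (i + k) := by
  induction k with
  | zero => rfl
  | succ k ih => rw [Function.iterate_succ_apply', ih, sh_σ, add_assoc]

lemma commute_σ_sh_iterate {i k : ℕ} (h : i + 2 ≤ k) (x : Binf) : Commute (σ i) (sh^[k] x) := by
  have hx : x ∈ Subgroup.closure (Set.range σ) :=
    PresentedGroup.closure_range_of braidRels ▸ Subgroup.mem_top x
  induction hx using Subgroup.closure_induction with
  | mem y hy =>
    obtain ⟨j, rfl⟩ := hy
    rw [sh_iterate_σ]
    exact commute_σ (by lia)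
  | one => rw [iterate_map_one]; exact Commute.one_right _
  | mul y z _ _ hy hz => rw [iterate_map_mul]; exact hy.mul_right hz
  | inv y _ hy => rw [iterate_map_inv]; exact hy.inv_right

lemma sc_mul_sh (a b : Binf) : sc a b * sh a = a * sh b * σ 0 :=
  inv_mul_cancel_right _ _

lemma shProd_sc_cons_cons (a b : Binf) (t : List Binf) :
    shProd (sc a b :: a :: t) = shProd (a :: b :: t) * σ 0 := by
  have hcomm : σ 0 * sh (sh (shProd t)) = sh (sh (shProd t)) * σ 0 :=
    commute_σ_sh_iterate (k := 2) le_rfl (shProd t)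
  calc shProd (sc a b :: a :: t)
      = sc a b * sh a * sh (sh (shProd t)) := by simp only [shProd, map_mul, mul_assoc]
    _ = a * sh b * (σ 0 * sh (sh (shProd t))) := by rw [sc_mul_sh, mul_assoc _ (σ 0)]
    _ = a * sh b * (sh (sh (shProd t)) * σ 0) := by rw [hcomm]
    _ = shProd (a :: b :: t) * σ 0 := by simp only [shProd, map_mul, mul_assoc]

lemma length_act1 (i : ℕ) (l : List Binf) : (act1 i l).length = l.length := by
  fun_induction act1 i l with
  | case1 => rfl
  | case2 i a t ih => rw [List.length_cons, List.length_cons, ih]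
  | case3 => rfl

lemma shProd_act1 {i : ℕ} {l : List Binf} (h : i + 2 ≤ l.length) :
    shProd (act1 i l) = shProd l * σ i := by
  induction i generalizing l with
  | zero =>
    match l, h with
    | a :: b :: t, _ => exact shProd_sc_cons_cons a b t
  | succ i ih =>
    match l, h with
    | a :: t, h =>
      calc a * sh (shProd (act1 i t))
          = a * sh (shProd t * σ i) := by rw [ih (Nat.le_of_succ_le_succ h)]
        _ = a * sh (shProd t) * σ (i + 1) := by rw [map_mul, sh_σ, mul_assoc]

/-- shifted product formula
`∏^sh((β₁, …, βₙ) • w) = ∏^sh(β₁, …, βₙ) · σ_{i₁} ⋯ σ_{i_k}`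
(indices in `w` are 0-indexed: `j ∈ w` stands for the paper's `σ_{j+1}`,
and the constraint `1 ≤ i ≤ n-1` of the paper reads `j + 2 ≤ n`). -/
theorem shifted_product_formula (n : ℕ) (hn : 2 ≤ n)
    (l : List Binf) (hl : l.length = n)
    (w : List ℕ) (hw : ∀ j ∈ w, j + 2 ≤ n) :
    shProd (actW l w) = shProd l * (w.map σ).prod := by
  induction w generalizing l with
  | nil => exact (mul_one _).symm
  | cons i w ih =>
    obtain ⟨hi, hw⟩ := List.forall_mem_cons.mp hw
    have hlen : (act1 i l).length = n := (length_act1 i l).trans hl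
    calc shProd (actW (act1 i l) w)
        = shProd (act1 i l) * (w.map σ).prod := ih (act1 i l) hlen hw
      _ = shProd l * σ i * (w.map σ).prod := by rw [shProd_act1 (hl ▸ hi)]
      _ = shProd l * ((i :: w).map σ).prod := by rw [List.map_cons, List.prod_cons, mul_assoc]
end

section
/- Freeness criterion: let (S, ▷) be a left-shelf generated by a single element g (i.e., S is the smallest subset of itself containing g and closed under ▷), and suppose the division relation has no cycle in S (⊏* is irreflexive). Then: (1) the relation ⊏* is a strict linear order on S; (2) for all a, b, c ∈ S one has a ⊏* a ▷ b, and b ⊏* c holds if and only if a ▷ b ⊏* a ▷ c; (3) S is free based on g: for every left-shelf (S', ▷') and every g' ∈ S', there exists a map φ : S → S' with φ(g) = g' and φ(a ▷ b) = φ(a) ▷' φ(b) for all a, b ∈ S. -/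
/-- The division relation of a left-shelf: `a ⊏ b` iff `a ▷ x = b` for some `x`. -/
def shelfDiv {S : Type*} [Shelf S] (a b : S) : Prop := ∃ x, Shelf.act a x = b

/-!
Terms in the generator are elements of a free magma, rewritten by left-selfdistributive (LD)
expansions `a * (b * c) → (a * b) * (a * c)`. Dehornoy's derivation `∂` satisfies
`t' →* ∂ t →* ∂ t'` whenever `t → t'`, so expansion is confluent and two terms are LD-equivalent
iff they have a common expansion. Every term `t` in the single letter `x` absorbs high right
powers: `t * x ^ n` is LD-equivalent to `x ^ (n + 1)`. Hence, for all terms `s` and `t`,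
`s * x ^ n` and `t * x ^ n` have a common expansion once `n` is large. Expansion preserves
iterated left factors up to expansion, so some expansions of `s` and `t` are iterated left factors
of one term, and one of them is an iterated left factor of the other. Evaluating at `g` shows that
two elements of `S` are comparable for `⊏*`, and that, when `⊏*` has no cycle, terms with the same
value in `S` are LD-equivalent and so have the same value in every other shelf, which is freeness.
-/

namespace LeftSelfDistributive

open Relation Function Filter
open scoped Quandles

section ZProperty

variable {α : Type*} {r : α → α → Prop} {d : α → α} {a b c : α}

/-- The Z-property of a rewriting relation `r` with respect to a map `d` (van Oostrom), a criterion
for confluence: the path `a → b →* d a →* d b` has the shape of the letter Z. -/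
def ZProperty (r : α → α → Prop) (d : α → α) : Prop :=
  ∀ ⦃a b⦄, r a b → ReflTransGen r b (d a) ∧ ReflTransGen r (d a) (d b)

theorem ZProperty.join_of_rel (hz : ZProperty r d) (hab : r a b) (hac : ReflTransGen r a c) :
    Join (ReflTransGen r) b c := by
  obtain rfl | ⟨c', hac', hc'c⟩ := hac.cases_tail
  · exact ⟨b, .refl, .single hab⟩
  · have hd : ReflTransGen r (d a) (d c') := hac'.lift' d fun _ _ h ↦ (hz h).2
    exact ⟨d c', (hz hab).1.trans hd, (hz hc'c).1⟩

theorem ZProperty.join (hz : ZProperty r d) (hab : ReflTransGen r a b)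
    (hac : ReflTransGen r a c) : Join (ReflTransGen r) b c := by
  induction hab with
  | refl => exact ⟨c, hac, .refl⟩
  | tail _ hbb' ih =>
    obtain ⟨e, hbe, hce⟩ := ih
    obtain ⟨k, hb'k, hek⟩ := hz.join_of_rel hbb' hbe
    exact ⟨k, hb'k, hce.trans hek⟩

end ZProperty

section Expansion

variable {M N : Type*} [Mul M] [Mul N]

/-- One step of left-selfdistributive (LD) expansion in a magma: a factor of the shape
`a * (b * c)`, at any depth, is replaced by `(a * b) * (a * c)`. -/
inductive LDStep : M → M → Prop
  | distrib (a b c : M) : LDStep (a * (b * c)) (a * b * (a * c))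
  | mul_right {a a' : M} (b : M) : LDStep a a' → LDStep (a * b) (a' * b)
  | mul_left (a : M) {b b' : M} : LDStep b b' → LDStep (a * b) (a * b')

/-- LD-expansion: any number of expansion steps. -/
abbrev LDExpands : M → M → Prop := ReflTransGen LDStep

/-- LD-equivalence, encoded as having a common expansion. On a free magma this is the congruence
generated by the left-selfdistributive law, thanks to confluence. -/
abbrev LDEquiv : M → M → Prop := Join LDExpands

theorem LDExpands.mul {a a' b b' : M} (ha : LDExpands a a') (hb : LDExpands b b') :
    LDExpands (a * b) (a' * b') :=
  (ha.lift (· * b) fun _ _ ↦ .mul_right b).trans (hb.lift (a' * ·) fun _ _ ↦ .mul_left a')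

theorem LDEquiv.mul {a a' b b' : M} : LDEquiv a a' → LDEquiv b b' → LDEquiv (a * b) (a' * b')
  | ⟨_, ha, ha'⟩, ⟨_, hb, hb'⟩ => ⟨_, ha.mul hb, ha'.mul hb'⟩

theorem LDStep.map (f : M →ₙ* N) {s t : M} (h : LDStep s t) : LDStep (f s) (f t) := by
  induction h with
  | distrib a b c => simpa only [map_mul] using .distrib (f a) (f b) (f c)
  | mul_right b _ ih => simpa only [map_mul] using .mul_right (f b) ih
  | mul_left a _ ih => simpa only [map_mul] using .mul_left (f a) ih

theorem LDExpands.map (f : M →ₙ* N) {s t : M} (h : LDExpands s t) : LDExpands (f s) (f t) :=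
  h.lift f fun _ _ ↦ LDStep.map f

theorem ldExpands_hom_apply {α : Type*} {f g : FreeMagma α →ₙ* M}
    (h : ∀ i, LDExpands (f (.of i)) (g (.of i))) (t : FreeMagma α) : LDExpands (f t) (g t) := by
  induction t with
  | ih1 i => exact h i
  | ih2 a b iha ihb => simpa only [map_mul] using iha.mul ihb

end Expansion

section Derivation

variable {α : Type*}

/-- Uniform distribution of `s`: the substitution of `s * x` for each letter `x`. It is the result
of distributing `s` all the way to the leaves of `t` in `s * t`. -/
def distribute (s : FreeMagma α) : FreeMagma α →ₙ* FreeMagma α :=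
  FreeMagma.lift fun i ↦ s * .of i

/-- Dehornoy's derivation `∂`, which dominates all one-step expansions of a term. -/
def derivation : FreeMagma α → FreeMagma α
  | .of i => .of i
  | a * b => distribute (derivation a) (derivation b)

theorem ldExpands_distribute (s t : FreeMagma α) : LDExpands (s * t) (distribute s t) := by
  induction t with
  | ih1 i => exact .refl
  | ih2 a b iha ihb => simpa only [map_mul] using (iha.mul ihb).head (.distrib s a b)

theorem LDExpands.distribute_left {s s' : FreeMagma α} (h : LDExpands s s') (t : FreeMagma α) :
    LDExpands (distribute s t) (distribute s' t) :=
  ldExpands_hom_apply (fun _ ↦ h.mul .refl) t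

theorem ldExpands_distribute_distribute (r s t : FreeMagma α) :
    LDExpands (distribute r (distribute s t)) (distribute (distribute r s) (distribute r t)) :=
  ldExpands_hom_apply (f := (distribute r).comp (distribute s))
    (g := (distribute (distribute r s)).comp (distribute r))
    (fun i ↦ ldExpands_distribute (distribute r s) (r * .of i)) t

theorem LDExpands.mul_distribute {a a' b b' : FreeMagma α} (ha : LDExpands a a')
    (hb : LDExpands b b') : LDExpands (a * b) (distribute a' b') :=
  (ha.mul hb).trans (ldExpands_distribute a' b')

theorem ldExpands_derivation (t : FreeMagma α) : LDExpands t (derivation t) := by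
  induction t with
  | ih1 i => exact .refl
  | ih2 a b iha ihb => exact iha.mul_distribute ihb

theorem ldExpands_derivation_of_ldStep {t t' : FreeMagma α} (h : LDStep t t') :
    LDExpands t' (derivation t) := by
  induction h with
  | distrib a b c =>
    have hab := ldExpands_derivation (a * b)
    have hac := ldExpands_derivation (a * c)
    exact (hab.mul hac).trans ((ldExpands_distribute (derivation b) (derivation c)).map
      (distribute (derivation a)))
  | mul_right b _ ih => exact ih.mul_distribute (ldExpands_derivation b)
  | mul_left a _ ih => exact (ldExpands_derivation a).mul_distribute ih

theorem LDStep.derivation_ldExpands {t t' : FreeMagma α} (h : LDStep t t') :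
    LDExpands (derivation t) (derivation t') := by
  induction h with
  | distrib a b c => exact ldExpands_distribute_distribute _ _ _
  | mul_right b _ ih => exact ih.distribute_left (derivation b)
  | mul_left a _ ih => exact ih.map (distribute (derivation a))

theorem ldStep_zProperty : ZProperty LDStep (derivation (α := α)) :=
  fun _ _ h ↦ ⟨ldExpands_derivation_of_ldStep h, h.derivation_ldExpands⟩

theorem ldEquiv_equivalence : Equivalence (LDEquiv (M := FreeMagma α)) :=
  equivalence_join fun _ _ _ ↦ ldStep_zProperty.join

instance : Trans (LDEquiv (M := FreeMagma α)) LDEquiv LDEquiv :=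
  ⟨ldEquiv_equivalence.trans⟩

end Derivation

section Absorption

/-- The right power `x ^ (n + 1) = x * (x * ⋯ * (x * x))`, indexed so that `n` counts the
multiplications. -/
def rightPow {M : Type*} [Mul M] (x : M) : ℕ → M
  | 0 => x
  | n + 1 => x * rightPow x n

theorem eventually_ldEquiv_rightPow (t : FreeMagma Unit) :
    ∀ᶠ n in atTop, LDEquiv (t * rightPow (.of ()) n) (rightPow (.of ()) (n + 1)) := by
  induction t with
  | ih1 _ => exact .of_forall fun _ ↦ ldEquiv_equivalence.refl _
  | ih2 a b iha ihb =>
    rw [← map_add_atTop_eq_nat 1, eventually_map]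
    filter_upwards [iha, ihb, (tendsto_add_atTop_nat 1).eventually iha] with n han hbn han'
    let p : ℕ → FreeMagma Unit := rightPow (.of ())
    calc
      LDEquiv (a * b * p (n + 1)) (a * b * (a * p n)) :=
        (ldEquiv_equivalence.refl _).mul (ldEquiv_equivalence.symm han)
      LDEquiv _ (a * (b * p n)) := ⟨_, .refl, .single (.distrib a b (p n))⟩
      LDEquiv _ (a * p (n + 1)) := (ldEquiv_equivalence.refl a).mul hbn
      LDEquiv _ (p (n + 2)) := han'

end Absorption

section LeftFactor

/-- `s` is the left factor of the product `t`. The reflexive transitive closure of this relation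
says that `s` is an iterated left factor of `t`. -/
def IsLeftFactor {M : Type*} [Mul M] (s t : M) : Prop := ∃ r, s * r = t

variable {α : Type*} {s s' t t' : FreeMagma α}

theorem isLeftFactor_leftUnique : Relator.LeftUnique (IsLeftFactor (M := FreeMagma α)) := by
  rintro s t _ ⟨r, rfl⟩ ⟨r', h⟩
  cases h
  rfl

theorem isLeftFactor_total (hs : ReflTransGen IsLeftFactor s t)
    (hs' : ReflTransGen IsLeftFactor s' t) :
    ReflTransGen IsLeftFactor s s' ∨ ReflTransGen IsLeftFactor s' s := by
  have h := ReflTransGen.total_of_right_unique isLeftFactor_leftUnique.flip hs.swap hs'.swap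
  exact (h.imp reflTransGen_swap.mp reflTransGen_swap.mp).symm

theorem reflTransGen_isLeftFactor_mul {a b : FreeMagma α} :
    ReflTransGen IsLeftFactor s (a * b) ↔ s = a * b ∨ ReflTransGen IsLeftFactor s a := by
  rw [ReflTransGen.cases_tail_iff, eq_comm]
  refine or_congr_right ⟨?_, fun hs ↦ ⟨a, hs, b, rfl⟩⟩
  rintro ⟨c, hsc, hca⟩
  exact isLeftFactor_leftUnique hca ⟨b, rfl⟩ ▸ hsc

theorem LDStep.exists_leftFactor (h : LDStep t t') (hs : ReflTransGen IsLeftFactor s t) :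
    ∃ s', LDExpands s s' ∧ ReflTransGen IsLeftFactor s' t' := by
  induction h with
  | distrib a b c =>
    obtain rfl | hs := reflTransGen_isLeftFactor_mul.mp hs
    · exact ⟨_, .single (.distrib a b c), .refl⟩
    · exact ⟨s, .refl, (hs.tail ⟨b, rfl⟩).tail ⟨a * c, rfl⟩⟩
  | mul_right b h ih =>
    obtain rfl | hs := reflTransGen_isLeftFactor_mul.mp hs
    · exact ⟨_, .single (.mul_right b h), .refl⟩
    · obtain ⟨s', hss', hs'⟩ := ih hs
      exact ⟨s', hss', hs'.tail ⟨b, rfl⟩⟩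
  | @mul_left a b b' h _ =>
    obtain rfl | hs := reflTransGen_isLeftFactor_mul.mp hs
    · exact ⟨_, .single (.mul_left a h), .refl⟩
    · exact ⟨s, .refl, hs.tail ⟨b', rfl⟩⟩

theorem LDExpands.exists_leftFactor (h : LDExpands t t') (hs : ReflTransGen IsLeftFactor s t) :
    ∃ s', LDExpands s s' ∧ ReflTransGen IsLeftFactor s' t' := by
  induction h with
  | refl => exact ⟨s, .refl, hs⟩
  | tail _ hstep ih =>
    obtain ⟨s₁, hs₁, hf₁⟩ := ih
    obtain ⟨s₂, hs₂, hf₂⟩ := hstep.exists_leftFactor hf₁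
    exact ⟨s₂, hs₁.trans hs₂, hf₂⟩

theorem exists_ldExpands_leftFactor_comparable (s t : FreeMagma Unit) :
    ∃ s' t', LDExpands s s' ∧ LDExpands t t' ∧
      (ReflTransGen IsLeftFactor s' t' ∨ ReflTransGen IsLeftFactor t' s') := by
  obtain ⟨n, hs, ht⟩ :=
    ((eventually_ldEquiv_rightPow s).and (eventually_ldEquiv_rightPow t)).exists
  obtain ⟨u, hsu, htu⟩ := ldEquiv_equivalence.trans hs (ldEquiv_equivalence.symm ht)
  obtain ⟨s', hss', hs'u⟩ := hsu.exists_leftFactor (.single ⟨_, rfl⟩)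
  obtain ⟨t', htt', ht'u⟩ := htu.exists_leftFactor (.single ⟨_, rfl⟩)
  exact ⟨s', t', hss', htt', isLeftFactor_total hs'u ht'u⟩

end LeftFactor

local infix:50 " ⊏* " => TransGen shelfDiv

section Evaluation

variable {α S S' : Type*} [Shelf S] [Shelf S'] (f : α → S)

/-- The value of a term in a shelf, the letters being evaluated by `f`. -/
def eval : FreeMagma α → S
  | .of i => f i
  | a * b => eval a ◃ eval b

theorem eval_surjective
    (hf : ∀ P : S → Prop, (∀ i, P (f i)) → (∀ a b, P a → P b → P (a ◃ b)) → ∀ a, P a) :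
    Surjective (eval f) := by
  refine hf _ (fun i ↦ ⟨.of i, rfl⟩) ?_
  rintro _ _ ⟨s, rfl⟩ ⟨t, rfl⟩
  exact ⟨s * t, rfl⟩

variable {f} {s t : FreeMagma α}

theorem LDStep.eval_eq (h : LDStep s t) : eval f s = eval f t := by
  induction h with
  | distrib a b c => exact Shelf.self_distrib
  | mul_right b _ ih => exact congrArg (· ◃ eval f b) ih
  | mul_left a _ ih => exact congrArg (eval f a ◃ ·) ih

theorem LDExpands.eval_eq (h : LDExpands s t) : eval f s = eval f t := by
  induction h with
  | refl => rfl
  | tail _ hstep ih => exact ih.trans hstep.eval_eq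

theorem LDEquiv.eval_eq : LDEquiv s t → eval f s = eval f t
  | ⟨_, hs, ht⟩ => hs.eval_eq.trans ht.eval_eq.symm

theorem eq_or_eval_transGen_shelfDiv (h : ReflTransGen IsLeftFactor s t) :
    s = t ∨ eval f s ⊏* eval f t := by
  refine (reflTransGen_iff_eq_or_transGen.mp h).imp Eq.symm fun h ↦ h.lift (eval f) ?_
  rintro a _ ⟨b, rfl⟩
  exact ⟨eval f b, rfl⟩

theorem eval_trichotomy (f : Unit → S) (s t : FreeMagma Unit) :
    eval f s ⊏* eval f t ∨ LDEquiv s t ∨ eval f t ⊏* eval f s := by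
  obtain ⟨s', t', hs, ht, h⟩ := exists_ldExpands_leftFactor_comparable s t
  have of_eq (h : s' = t') : LDEquiv s t := ⟨t', h ▸ hs, ht⟩
  rw [hs.eval_eq, ht.eval_eq]
  rcases h with h | h
  · exact (eq_or_eval_transGen_shelfDiv h).elim (.inr ∘ .inl ∘ of_eq) .inl
  · exact .inr ((eq_or_eval_transGen_shelfDiv h).imp (of_eq ∘ Eq.symm) id)

theorem ldEquiv_of_eval_eq (hirr : ∀ a : S, ¬ a ⊏* a) {f : Unit → S} {s t : FreeMagma Unit}
    (h : eval f s = eval f t) : LDEquiv s t := by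
  have key := eval_trichotomy f s t
  rw [h] at key
  exact (key.resolve_left (hirr _)).resolve_right (hirr _)

theorem exists_shelfHom_of_factorsThrough (hf : Surjective (eval f)) {f' : α → S'}
    (h : FactorsThrough (eval f') (eval f)) : ∃ φ : S →◃ S', ∀ i, φ (f i) = f' i := by
  refine ⟨⟨eval f' ∘ surjInv hf, fun {a b} ↦ ?_⟩, fun i ↦ ?_⟩
  · refine h (a := surjInv hf (a ◃ b)) (b := surjInv hf a * surjInv hf b) ?_
    simp only [eval, surjInv_eq]
  · exact h (b := .of i) (surjInv_eq hf (f i))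

end Evaluation

section Order

variable {S : Type*} [Shelf S]

theorem transGen_shelfDiv_trichotomy {f : Unit → S} (hf : Surjective (eval f)) (a b : S) :
    a ⊏* b ∨ a = b ∨ b ⊏* a := by
  obtain ⟨s, rfl⟩ := hf a
  obtain ⟨t, rfl⟩ := hf b
  exact (eval_trichotomy f s t).imp_right (.imp_left LDEquiv.eval_eq)

theorem transGen_shelfDiv_act (a b : S) : a ⊏* a ◃ b := .single ⟨b, rfl⟩

theorem act_transGen_shelfDiv_act (a : S) {b c : S} (h : b ⊏* c) : a ◃ b ⊏* a ◃ c := by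
  refine h.lift (a ◃ ·) ?_
  rintro u _ ⟨v, rfl⟩
  exact ⟨a ◃ v, Shelf.self_distrib.symm⟩

theorem act_transGen_shelfDiv_act_iff (hirr : ∀ a : S, ¬ a ⊏* a)
    (htri : ∀ a b : S, a ⊏* b ∨ a = b ∨ b ⊏* a) {a b c : S} : a ◃ b ⊏* a ◃ c ↔ b ⊏* c := by
  refine ⟨fun h ↦ (htri b c).resolve_right ?_, act_transGen_shelfDiv_act a⟩
  rintro (rfl | hcb)
  · exact hirr _ h
  · exact hirr _ (h.trans (act_transGen_shelfDiv_act a hcb))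

end Order

end LeftSelfDistributive

/-- freeness criterion. If a left-shelf `S` is generated by a
single element `g` and the division relation has no cycle (`⊏*` is
irreflexive), then `⊏*` is a strict linear order satisfying (3.1), and `S`
is free based on `g`. -/
theorem freeness_criterion {S : Type*} [Shelf S] (g : S)
    (hgen : ∀ P : S → Prop, P g →
      (∀ a b, P a → P b → P (Shelf.act a b)) → ∀ a, P a)
    (hirr : ∀ a : S, ¬ Relation.TransGen shelfDiv a a) :
    (∀ a : S, ¬ Relation.TransGen shelfDiv a a) ∧
    (∀ a b c : S, Relation.TransGen shelfDiv a b →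
      Relation.TransGen shelfDiv b c → Relation.TransGen shelfDiv a c) ∧
    (∀ a b : S, Relation.TransGen shelfDiv a b ∨ a = b ∨
      Relation.TransGen shelfDiv b a) ∧
    (∀ a b : S, Relation.TransGen shelfDiv a (Shelf.act a b)) ∧
    (∀ a b c : S, Relation.TransGen shelfDiv b c ↔
      Relation.TransGen shelfDiv (Shelf.act a b) (Shelf.act a c)) ∧
    (∀ (S' : Type*) [Shelf S'] (g' : S'),
      ∃ φ : S → S', φ g = g' ∧
        ∀ a b : S, φ (Shelf.act a b) = Shelf.act (φ a) (φ b)) := by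
  open LeftSelfDistributive in
  have hsurj : Function.Surjective (eval fun _ : Unit ↦ g) :=
    eval_surjective _ fun P hg ↦ hgen P (hg ())
  have htri := transGen_shelfDiv_trichotomy hsurj
  refine ⟨hirr, fun _ _ _ ↦ .trans, htri, transGen_shelfDiv_act,
    fun _ _ _ ↦ (act_transGen_shelfDiv_act_iff hirr htri).symm, fun S' _ g' ↦ ?_⟩
  obtain ⟨φ, hφ⟩ := exists_shelfHom_of_factorsThrough (f' := fun _ ↦ g') hsurj
    fun _ _ h ↦ (ldEquiv_of_eval_eq hirr h).eval_eq
  exact ⟨φ, hφ (), fun _ _ ↦ φ.map_act⟩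
end

section
/- For all braids β, β' ∈ B_∞, if β ⊏* β' holds in the braid shelf (B_∞, ▷), then β⁻¹β' is σ₁-positive. -/
/-- A braid is `σ₁`-positive if it can be written
`sh γ₀ · σ₁ · sh γ₁ · σ₁ ⋯ σ₁ · sh γₙ` with `n ≥ 1` factors `σ₁`
(recall that `σ 0` is the paper's `σ₁`). -/
def sigma1Pos (β : Binf) : Prop :=
  ∃ (l : List Binf) (γ : Binf), l ≠ [] ∧
    β = (l.map (fun g => sh g * σ 0)).prod * sh γ

/-!
A single step `a ⊏ a ▷ x` has quotient `a⁻¹ (a ▷ x) = sh x · σ₁ · sh a⁻¹`, in which `σ₁` occurs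
exactly once and `σ₁⁻¹` not at all. Along a chain of steps these quotients telescope, and a product
of `σ₁`-positive elements is `σ₁`-positive.
-/

section ShiftPos

variable {M N : Type*} [Monoid M] [Monoid N] (φ : M →* N) (s : N)

/-- The analogue of `σ₁`-positivity in which a homomorphism `φ` replaces the shift endomorphism and
an element `s` replaces the generator `σ₁`; `sigma1Pos` is `ShiftPos sh (σ 0)`. -/
def ShiftPos (b : N) : Prop :=
  ∃ (l : List M) (y : M), l ≠ [] ∧ b = (l.map fun g => φ g * s).prod * φ y

theorem shiftPos_map_mul_mul_map (x y : M) : ShiftPos φ s (φ x * s * φ y) :=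
  ⟨[x], y, List.cons_ne_nil x [], by rw [List.map_singleton, List.prod_singleton]⟩

variable {φ s} in
theorem ShiftPos.mul {b c : N} (hb : ShiftPos φ s b) (hc : ShiftPos φ s c) :
    ShiftPos φ s (b * c) := by
  obtain ⟨l, y, -, rfl⟩ := hb
  obtain ⟨_ | ⟨g, m⟩, z, hm, rfl⟩ := hc
  · exact absurd rfl hm
  -- The trailing factor `φ y` of the first word is absorbed into the leading `φ g` of the second.
  · exact ⟨l ++ (y * g) :: m, z, by simp, by simp [mul_assoc]⟩

end ShiftPos

section ShiftConj

variable {G : Type*} [Group G] (φ : G →* G) (s : G)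

/-- Shifted conjugation in a group, with an endomorphism `φ` in the role of the shift and an
element `s` in the role of `σ₁`; the operation `sc` on braids is `shiftConj sh (σ 0)`. -/
def shiftConj (a x : G) : G := a * φ x * s * (φ a)⁻¹

theorem inv_mul_shiftConj (a x : G) : a⁻¹ * shiftConj φ s a x = φ x * s * φ a⁻¹ := by
  simp [shiftConj, mul_assoc]

theorem shiftPos_inv_mul_shiftConj (a x : G) : ShiftPos φ s (a⁻¹ * shiftConj φ s a x) := by
  rw [inv_mul_shiftConj]
  exact shiftPos_map_mul_mul_map φ s x a⁻¹

variable {φ s} in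
theorem ShiftPos.inv_mul_trans {a b c : G} (hab : ShiftPos φ s (a⁻¹ * b))
    (hbc : ShiftPos φ s (b⁻¹ * c)) : ShiftPos φ s (a⁻¹ * c) := by
  simpa [mul_assoc] using hab.mul hbc

theorem div_transGen_sigma1Pos_general {a b : G}
    (h : Relation.TransGen (fun a b => ∃ x, shiftConj φ s a x = b) a b) :
    ShiftPos φ s (a⁻¹ * b) := by
  induction h with
  | single h =>
    obtain ⟨x, rfl⟩ := h
    exact shiftPos_inv_mul_shiftConj φ s a x
  | @tail b _ _ h ih =>
    obtain ⟨x, rfl⟩ := h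
    exact ih.inv_mul_trans (shiftPos_inv_mul_shiftConj φ s b x)

end ShiftConj

/-- if `β ⊏* β'` in the braid shelf then `β⁻¹ β'` is
`σ₁`-positive. -/
theorem div_transGen_sigma1Pos (β β' : Binf)
    (h : Relation.TransGen (fun a b : Binf => ∃ x, sc a x = b) β β') :
    sigma1Pos (β⁻¹ * β') :=
  div_transGen_sigma1Pos_general sh (σ 0) h
end

section
/- A σ₁-positive braid is never trivial: for every n ≥ 1 and all γ₀, γ₁, …, γₙ ∈ B_∞, the braid sh(γ₀) · σ₁ · sh(γ₁) · σ₁ ⋯ σ₁ · sh(γₙ) (containing n factors σ₁) is not equal to the unit braid 1. -/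
/-!
The Artin representation lets `σ i` act on the free group by `x_i ↦ x_i x_{i+1} x_i⁻¹`,
`x_{i+1} ↦ x_i`. Consider the set `C` of elements whose reduced word starts with `x₀`. In the Cayley
tree, `C` is a half-tree: a path can leave it only through the edge from `x₀` to `1`. Following the
images of the prefixes of a reduced word, one finds that both `σ 0` and every shifted braid map `C`
into itself. Since shifted braids fix `x₀` and `σ 0` sends `x₀⁻¹` into `C`, a `σ₁`-positive braid
sends `x₀⁻¹` into `C`, hence moves it (Larue's argument).
-/

section StartsWith

open FreeGroup (mk map of startsWith IsReduced mk_toWord toWord_mk)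

variable {α β : Type*}

lemma inv_mk_singleton (y : α × Bool) : (mk [y])⁻¹ = mk [(y.1, !y.2)] := by
  simp only [FreeGroup.inv_mk, FreeGroup.invRev, List.map_cons, List.map_nil,
    List.reverse_singleton]

lemma map_mk_singleton {F : Type*} [FunLike F (FreeGroup α) (FreeGroup β)]
    [MonoidHomClass F (FreeGroup α) (FreeGroup β)] {f : F} {a : α} {b : β}
    (hab : f (of a) = of b) (e : Bool) : f (mk [(a, e)]) = mk [(b, e)] := by
  cases e with
  | true => exact hab
  | false => exact (map_inv f (of a)).trans (congrArg _ hab)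

variable [DecidableEq α]

lemma mem_startsWith_iff {x : α × Bool} {g : FreeGroup α} :
    g ∈ startsWith x ↔ ∃ L, g.toWord = x :: L := by
  simp only [startsWith, Set.mem_ofPred_eq]
  cases g.toWord <;> simp

lemma mk_singleton_mem_startsWith_iff {x y : α × Bool} : mk [y] ∈ startsWith x ↔ y = x := by
  simp [startsWith]

lemma toWord_mul_mk_singleton_of_getLast?_eq {g : FreeGroup α} {y : α × Bool}
    (hg : g.toWord.getLast? = some (y.1, !y.2)) : (g * mk [y]).toWord = g.toWord.dropLast := by
  obtain ⟨L, hL⟩ := List.getLast?_eq_some_iff.1 hg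
  have hLred : IsReduced L := List.IsChain.left_of_append (hL ▸ FreeGroup.isReduced_toWord)
  have hmul : g * mk [y] = mk L := by
    rw [← mk_toWord (x := g), hL, ← FreeGroup.mul_mk, ← inv_mk_singleton, inv_mul_cancel_right]
  rw [hmul, toWord_mk, hLred.reduce_eq, hL, List.dropLast_concat]

lemma toWord_mul_mk_singleton_of_getLast?_ne {g : FreeGroup α} {y : α × Bool}
    (hg : g.toWord.getLast? ≠ some (y.1, !y.2)) : (g * mk [y]).toWord = g.toWord ++ [y] := by
  have hred : IsReduced (g.toWord ++ [y]) := by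
    refine List.isChain_append.2 ⟨FreeGroup.isReduced_toWord, List.isChain_singleton _, ?_⟩
    rintro ⟨a, e⟩ hlast _ ⟨⟩ (rfl : a = y.1)
    by_contra he
    exact hg (hlast.trans (congrArg (fun e => some (y.1, e)) (Bool.eq_not_of_ne he)))
  rw [FreeGroup.toWord_mul, toWord_mk, FreeGroup.reduce_singleton, hred.reduce_eq]

/- In the Cayley tree, the only edge leaving the half-tree `startsWith x` ends at `1`. -/
lemma mul_mk_singleton_mem_startsWith {x y : α × Bool} {g : FreeGroup α} (hg : g ∈ startsWith x)
    (hne : g * mk [y] ≠ 1) : g * mk [y] ∈ startsWith x := by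
  obtain ⟨R, hR⟩ := mem_startsWith_iff.1 hg
  rw [mem_startsWith_iff]
  by_cases hcancel : g.toWord.getLast? = some (y.1, !y.2)
  · have hword := toWord_mul_mk_singleton_of_getLast?_eq hcancel
    rw [hR] at hword
    cases R with
    | nil => exact absurd (FreeGroup.toWord_eq_nil_iff.1 hword) hne
    | cons r R => exact ⟨_, hword⟩
  · rw [toWord_mul_mk_singleton_of_getLast?_ne hcancel, hR]
    exact ⟨R ++ [y], rfl⟩

lemma mul_mk_singleton_mem_startsWith_of_ne {x y : α × Bool} {g : FreeGroup α}
    (hg : g ∈ startsWith x) (hxy : (y.1, !y.2) ≠ x) : g * mk [y] ∈ startsWith x := by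
  refine mul_mk_singleton_mem_startsWith hg fun h => hxy ?_
  rwa [eq_inv_of_mul_eq_one_left h, inv_mk_singleton, mk_singleton_mem_startsWith_iff] at hg

lemma mul_map_mem_startsWith {x : α × Bool} {φ : β → α} (hφ : ∀ b, φ b ≠ x.1) (h : FreeGroup β)
    {g : FreeGroup α} (hg : g ∈ startsWith x) : g * map φ h ∈ startsWith x := by
  have letter (b : β) (e : Bool) {g : FreeGroup α} (hg : g ∈ startsWith x) :
      g * mk [(φ b, e)] ∈ startsWith x :=
    mul_mk_singleton_mem_startsWith_of_ne hg fun heq => hφ b (congrArg Prod.fst heq)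
  induction h using FreeGroup.induction_on generalizing g with
  | C1 => simpa only [map_one, mul_one] using hg
  | of b => exact letter b true hg
  | inv_of b _ => exact letter b false hg
  | mul h₁ h₂ ih₁ ih₂ => simpa only [map_mul, mul_assoc] using ih₂ (ih₁ hg)

lemma conj_mem_startsWith {a b : α} (hab : a ≠ b) (e : Bool) :
    of a * mk [(b, e)] * (of a)⁻¹ ∈ startsWith (a, true) := by
  have ha : of a ∈ startsWith (a, true) := mk_singleton_mem_startsWith_iff.2 rfl
  have hb : mk [(b, e)] ≠ 1 := FreeGroup.startsWith.ne_one _ (mk_singleton_mem_startsWith_iff.2 rfl)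
  refine mul_mk_singleton_mem_startsWith (y := (a, false))
    (mul_mk_singleton_mem_startsWith_of_ne ha fun heq => hab (congrArg Prod.fst heq).symm) ?_
  exact conj_eq_one_iff.not.2 hb

theorem startsWith_induction {x : α × Bool} {P : FreeGroup α → Prop} (letter : P (mk [x]))
    (mul_letter : ∀ g y, P g → g * mk [y] ∈ startsWith x → P (g * mk [y]))
    {g : FreeGroup α} (hg : g ∈ startsWith x) : P g := by
  have of_isReduced (R : List (α × Bool)) (hR : IsReduced (x :: R)) : P (mk (x :: R)) := by
    induction R using List.reverseRecOn with
    | nil => exact letter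
    | append_singleton R y ih =>
      rw [← List.cons_append] at hR ⊢
      rw [← FreeGroup.mul_mk]
      refine mul_letter _ y (ih (List.IsChain.left_of_append hR)) ?_
      rw [FreeGroup.mul_mk, mem_startsWith_iff, toWord_mk, hR.reduce_eq]
      exact ⟨R ++ [y], rfl⟩
  obtain ⟨R, hR⟩ := mem_startsWith_iff.1 hg
  rw [← mk_toWord (x := g), hR]
  exact of_isReduced R (hR ▸ FreeGroup.isReduced_toWord)

/- An injective `f` maps no vertex of `startsWith x` to `1`, so `hletter` need only control paths
that do not end at `1`. -/
theorem map_mem_startsWith [DecidableEq β] {F : Type*} [FunLike F (FreeGroup α) (FreeGroup β)]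
    [MonoidHomClass F (FreeGroup α) (FreeGroup β)] {f : F} (hf : Function.Injective f)
    {x : α × Bool} {z : β × Bool} (hx : f (mk [x]) ∈ startsWith z)
    (hletter : ∀ y, ∀ g ∈ startsWith z, g * f (mk [y]) ≠ 1 → g * f (mk [y]) ∈ startsWith z)
    {g : FreeGroup α} (hg : g ∈ startsWith x) : f g ∈ startsWith z := by
  refine startsWith_induction (P := fun g => f g ∈ startsWith z) hx (fun g y hfg hgy => ?_) hg
  have hne : f (g * mk [y]) ≠ 1 := (map_ne_one_iff f hf).2 (FreeGroup.startsWith.ne_one _ hgy)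
  rw [map_mul] at hne ⊢
  exact hletter y (f g) hfg hne

end StartsWith

section HalfTwist

open FreeGroup (mk map of lift startsWith lift_apply_of)

variable {α : Type*}

lemma mulAut_freeGroup_ext {f g : MulAut (FreeGroup α)} (h : ∀ n, f (of n) = g (of n)) : f = g :=
  MulEquiv.toMonoidHom_injective (FreeGroup.ext_hom _ _ h)

variable [DecidableEq α] {a b c d : α}

/-- The half twist exchanging the free generators `a` and `b`, as an endomorphism of the free group:
`a ↦ a b a⁻¹`, `b ↦ a`. -/
def halfTwistHom (a b : α) : FreeGroup α →* FreeGroup α :=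
  lift fun n => if n = a then of a * of b * (of a)⁻¹ else if n = b then of a else of n

/-- The half twist inverse to `halfTwistHom a b`: `a ↦ b`, `b ↦ b⁻¹ a b`. -/
def halfTwistInvHom (a b : α) : FreeGroup α →* FreeGroup α :=
  lift fun n => if n = a then of b else if n = b then (of b)⁻¹ * of a * of b else of n

/-- The automorphism `a ↦ a b a⁻¹`, `b ↦ a` of the free group, by which an Artin generator acts in
the Artin representation. -/
def halfTwist (hab : a ≠ b) : MulAut (FreeGroup α) :=
  MonoidHom.toMulEquiv (halfTwistHom a b) (halfTwistInvHom a b)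
    (by
      ext n
      by_cases hna : n = a <;> by_cases hnb : n = b <;>
        simp [halfTwistHom, halfTwistInvHom, hna, hnb, hab.symm, mul_assoc])
    (by
      ext n
      by_cases hna : n = a <;> by_cases hnb : n = b <;>
        simp [halfTwistHom, halfTwistInvHom, hna, hnb, hab.symm, mul_assoc])

lemma halfTwist_of (hab : a ≠ b) (n : α) : halfTwist hab (of n) =
    if n = a then of a * of b * (of a)⁻¹ else if n = b then of a else of n :=
  lift_apply_of

lemma halfTwist_of_left (hab : a ≠ b) :
    halfTwist hab (of a) = of a * of b * (of a)⁻¹ := by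
  rw [halfTwist_of, if_pos rfl]

lemma halfTwist_of_of_ne (hab : a ≠ b) {n : α} (hna : n ≠ a) (hnb : n ≠ b) :
    halfTwist hab (of n) = of n := by
  rw [halfTwist_of, if_neg hna, if_neg hnb]

lemma halfTwist_commute (hab : a ≠ b) (hcd : c ≠ d) (hac : a ≠ c) (had : a ≠ d) (hbc : b ≠ c)
    (hbd : b ≠ d) : Commute (halfTwist hab) (halfTwist hcd) := by
  refine mulAut_freeGroup_ext fun n => ?_
  simp only [MulAut.mul_apply, halfTwist_of]
  split_ifs <;> simp_all [halfTwist_of, eq_comm]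

lemma halfTwist_braid (hab : a ≠ b) (hbc : b ≠ c) (hac : a ≠ c) :
    halfTwist hab * halfTwist hbc * halfTwist hab =
      halfTwist hbc * halfTwist hab * halfTwist hbc := by
  refine mulAut_freeGroup_ext fun n => ?_
  simp only [MulAut.mul_apply]
  obtain rfl | hna := eq_or_ne n a
  · simp [halfTwist_of, hab, hac, hab.symm, hac.symm, hbc.symm, mul_assoc]
  obtain rfl | hnb := eq_or_ne n b
  · simp [halfTwist_of, hab, hac, hab.symm, hac.symm, hbc.symm, mul_assoc]
  obtain rfl | hnc := eq_or_ne n c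
  · simp [halfTwist_of, hab, hac, hab.symm, hac.symm, hbc.symm]
  simp [halfTwist_of, hna, hnb, hnc]

lemma halfTwist_map {β : Type*} [DecidableEq β] {φ : α → β} (hφ : Function.Injective φ)
    (hab : a ≠ b) (w : FreeGroup α) :
    halfTwist (hφ.ne hab) (map φ w) = map φ (halfTwist hab w) := by
  suffices (halfTwist (hφ.ne hab)).toMonoidHom.comp (map φ) =
      (map φ).comp (halfTwist hab).toMonoidHom from DFunLike.congr_fun this w
  ext n
  by_cases hna : n = a <;> by_cases hnb : n = b <;>
    simp [halfTwist_of, hna, hnb, hφ.eq_iff, hab.symm]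

lemma halfTwist_mk_left (hab : a ≠ b) (e : Bool) :
    halfTwist hab (mk [(a, e)]) = of a * mk [(b, e)] * (of a)⁻¹ := by
  cases e with
  | true => exact halfTwist_of_left hab
  | false =>
    calc halfTwist hab (of a)⁻¹
      _ = (of a * of b * (of a)⁻¹)⁻¹ := by rw [map_inv, halfTwist_of_left]
      _ = of a * (of b)⁻¹ * (of a)⁻¹ := conj_inv

lemma halfTwist_mk_of_ne_left (hab : a ≠ b) {n : α} (hna : n ≠ a) (e : Bool) :
    halfTwist hab (mk [(n, e)]) = mk [(if n = b then a else n, e)] := by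
  refine map_mk_singleton ?_ e
  rw [halfTwist_of, if_neg hna, apply_ite of]

/- A half twist sends each letter other than `a` and `a⁻¹` to a letter, so only the prefixes of
`a b^{±1} a⁻¹` need attention. -/
lemma halfTwist_mem_startsWith (hab : a ≠ b) {g : FreeGroup α} (hg : g ∈ startsWith (a, true)) :
    halfTwist hab g ∈ startsWith (a, true) := by
  refine map_mem_startsWith (halfTwist hab).injective ?_ ?_ hg
  · rw [halfTwist_mk_left]
    exact conj_mem_startsWith hab true
  rintro ⟨n, e⟩ g hg hne
  by_cases hna : n = a
  · subst hna
    simp only [halfTwist_mk_left, ← mul_assoc] at hne ⊢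
    have hga : g * of n ∈ startsWith (n, true) :=
      mul_mk_singleton_mem_startsWith_of_ne hg (by simp)
    have hgab : g * of n * mk [(b, e)] ∈ startsWith (n, true) :=
      mul_mk_singleton_mem_startsWith_of_ne hga fun heq => hab (congrArg Prod.fst heq).symm
    exact mul_mk_singleton_mem_startsWith hgab hne
  · rw [halfTwist_mk_of_ne_left hab hna] at hne ⊢
    exact mul_mk_singleton_mem_startsWith hg hne

end HalfTwist

section ArtinRep

open FreeGroup (mk map of lift startsWith lift_apply_of)

lemma lift_halfTwist_eq_one_of_mem_braidRels :
    ∀ r ∈ braidRels, lift (fun i : ℕ => halfTwist i.succ_ne_self.symm) r = 1 := by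
  rintro r (⟨i, j, hij, rfl⟩ | ⟨i, rfl⟩)
  · have hcomm : Commute (halfTwist i.succ_ne_self.symm) (halfTwist j.succ_ne_self.symm) :=
      halfTwist_commute _ _ (by omega) (by omega) (by omega) (by omega)
    simp only [map_mul, map_inv, lift_apply_of]
    rw [hcomm.eq, mul_inv_cancel_right, mul_inv_cancel]
  · simp only [map_mul, map_inv, lift_apply_of]
    rw [mul_inv_eq_one, halfTwist_braid _ _ (by omega)]

/-- The Artin representation of `Binf` by automorphisms of the free group on `x₀, x₁, …`; the braid
`σ i` acts as the half twist of `x_i` and `x_{i+1}`. -/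
def artinRep : Binf →* MulAut (FreeGroup ℕ) :=
  PresentedGroup.toGroup lift_halfTwist_eq_one_of_mem_braidRels

lemma artinRep_σ (i : ℕ) : artinRep (σ i) = halfTwist i.succ_ne_self.symm :=
  PresentedGroup.toGroup.of lift_halfTwist_eq_one_of_mem_braidRels

lemma artinRep_sh_of_zero (γ : Binf) : artinRep (sh γ) (of 0) = of 0 := by
  let fixing : Subgroup Binf :=
    (MulAction.stabilizer (MulAut (FreeGroup ℕ)) (of 0)).comap (artinRep.comp sh)
  refine PresentedGroup.generated_by braidRels fixing (fun i => ?_) γ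
  change artinRep (sh (σ i)) (of 0) = of 0
  rw [sh_σ, artinRep_σ, halfTwist_of_of_ne _ (by omega) (by omega)]

lemma artinRep_sh_map_succ (γ : Binf) (w : FreeGroup ℕ) :
    artinRep (sh γ) (map Nat.succ w) = map Nat.succ (artinRep γ w) := by
  have hγ : γ ∈ Subgroup.closure (Set.range σ) := by
    rw [show σ = PresentedGroup.of from rfl, PresentedGroup.closure_range_of]
    exact Subgroup.mem_top γ
  induction hγ using Subgroup.closure_induction generalizing w with
  | mem x hx =>
    obtain ⟨i, rfl⟩ := hx
    rw [sh_σ, artinRep_σ, artinRep_σ]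
    exact halfTwist_map Nat.succ_injective _ w
  | one => simp only [map_one, MulAut.one_apply]
  | mul x y _ _ ihx ihy => simp only [map_mul, MulAut.mul_apply, ihx, ihy]
  | inv x _ ih =>
    rw [map_inv, map_inv, map_inv, MulAut.inv_apply, MulEquiv.symm_apply_eq, ih,
      MulAut.apply_inv_self]

lemma artinRep_sh_mem_startsWith (γ : Binf) {g : FreeGroup ℕ} (hg : g ∈ startsWith (0, true)) :
    artinRep (sh γ) g ∈ startsWith (0, true) := by
  have fix_letter (e : Bool) : artinRep (sh γ) (mk [(0, e)]) = mk [(0, e)] :=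
    map_mk_singleton (artinRep_sh_of_zero γ) e
  refine map_mem_startsWith (artinRep (sh γ)).injective ?_ ?_ hg
  · rw [fix_letter, mk_singleton_mem_startsWith_iff]
  rintro ⟨_ | k, e⟩ g hg hne
  · rw [fix_letter] at hne ⊢
    exact mul_mk_singleton_mem_startsWith hg hne
  · rw [show mk [(k + 1, e)] = map Nat.succ (mk [(k, e)]) from rfl, artinRep_sh_map_succ]
    exact mul_map_mem_startsWith Nat.succ_ne_zero _ hg

lemma artinRep_sigma1_positive_mem_startsWith {l : List Binf} (hl : l ≠ []) :
    artinRep (l.map fun g => sh g * σ 0).prod (of 0)⁻¹ ∈ startsWith (0, true) := by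
  induction l with
  | nil => exact absurd rfl hl
  | cons γ l ih =>
    simp only [List.map_cons, List.prod_cons, map_mul, MulAut.mul_apply, artinRep_σ]
    apply artinRep_sh_mem_startsWith
    by_cases hl' : l = []
    · subst hl'
      rw [List.map_nil, List.prod_nil, map_one, MulAut.one_apply]
      change halfTwist (Nat.succ_ne_self 0).symm (mk [(0, false)]) ∈ _
      rw [halfTwist_mk_left]
      exact conj_mem_startsWith (Nat.succ_ne_self 0).symm false
    · exact halfTwist_mem_startsWith _ (ih hl')

end ArtinRep

/-- a `σ₁`-positive braid is never trivial: for `n ≥ 1` and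
`γ₀, …, γₙ ∈ Binf` (here `l = [γ₀, …, γ_{n-1}]`, `γ = γₙ`, `n = l.length`),
the braid `sh γ₀ · σ₁ · sh γ₁ · σ₁ ⋯ σ₁ · sh γₙ` is not `1`. -/
theorem sigma1_positive_ne_one (l : List Binf) (γ : Binf) (hl : l ≠ []) :
    (l.map (fun g => sh g * σ 0)).prod * sh γ ≠ 1 := by
  intro hone
  have hmem := artinRep_sigma1_positive_mem_startsWith hl
  have hfix : artinRep (l.map fun g => sh g * σ 0).prod (.of 0)⁻¹ = (.of 0)⁻¹ := by
    calc artinRep (l.map fun g => sh g * σ 0).prod (.of 0)⁻¹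
      _ = artinRep ((l.map fun g => sh g * σ 0).prod * sh γ) (.of 0)⁻¹ := by
        rw [map_mul, MulAut.mul_apply, map_inv (artinRep (sh γ)), artinRep_sh_of_zero]
      _ = (.of 0)⁻¹ := by rw [hone, map_one, MulAut.one_apply]
  rw [hfix] at hmem
  exact absurd (mk_singleton_mem_startsWith_iff.1 hmem) (by decide)
end

section
/- Division has no cycle in the braid shelf: there is no braid β ∈ B_∞ with β ⊏* β; that is, the transitive closure ⊏* of the division relation of (B_∞, ▷) is irreflexive. -/
/-!
Let `R` be a bijection of `V × V` satisfying the Yang–Baxter equation. Then `B_∞` acts on sequences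
in `V`: the first generator applies `R` to the first two entries, the next one to the second and
third, and so on. The image of `sh` therefore preserves the first entry. Suppose that some function
`h` on `V` satisfies `h u < h (R (u, v)).1` for all `u` and `v`. Since
`a⁻¹ (a ▷ x) = sh x · σ₁ · (sh a)⁻¹` involves the first generator exactly once, it increases the
value of `h` at the first entry. Hence `b ↦ h (first entry of b⁻¹ s)`, for a fixed sequence `s`,
strictly decreases along division, and division has no cycle.

Such an `R` is the subtraction-free rational form of Dynnikov's action of braids on laminations of a
punctured disc. In suitable coordinates it becomes affine: every point `p` of `V` is an interval and
determines an affine map of the line, the first component of `R (p, q)` is the image of `q` under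
the map of `p`, and the second one is forced by conservation of the composite of the two maps.
-/

open Equiv (Perm)

section YangBaxter

variable {V : Type*}

/-- The action `R₁₂` of a map of pairs on the first two entries of a triple. -/
def onFirstTwo (R : V × V → V × V) (t : V × V × V) : V × V × V :=
  ((R (t.1, t.2.1)).1, (R (t.1, t.2.1)).2, t.2.2)

/-- The action `R₂₃` of a map of pairs on the last two entries of a triple. -/
def onLastTwo (R : V × V → V × V) : V × V × V → V × V × V :=
  Prod.map id R

/-- The set-theoretic Yang–Baxter equation, in its braid form `R₁₂ R₂₃ R₁₂ = R₂₃ R₁₂ R₂₃`. -/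
def IsYangBaxter (R : V × V → V × V) : Prop :=
  ∀ t, onFirstTwo R (onLastTwo R (onFirstTwo R t)) = onLastTwo R (onFirstTwo R (onLastTwo R t))

lemma IsYangBaxter.of_injective {G : Type*} [CancelMonoid G] {R : V × V → V × V} {φ : V → G}
    (hφ : Function.Injective φ) (hmul : ∀ t, φ (R t).1 * φ (R t).2 = φ t.1 * φ t.2)
    (hfst : ∀ t, (onFirstTwo R (onLastTwo R (onFirstTwo R t))).1 =
      (onLastTwo R (onFirstTwo R (onLastTwo R t))).1)
    (hlast : ∀ t, (onFirstTwo R (onLastTwo R (onFirstTwo R t))).2.2 =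
      (onLastTwo R (onFirstTwo R (onLastTwo R t))).2.2) :
    IsYangBaxter R := by
  intro t
  let prod (t : V × V × V) : G := φ t.1 * φ t.2.1 * φ t.2.2
  have prod_onFirstTwo (t) : prod (onFirstTwo R t) = prod t := by
    simp [prod, onFirstTwo, hmul]
  have prod_onLastTwo (t) : prod (onLastTwo R t) = prod t := by
    simp [prod, onLastTwo, mul_assoc, hmul]
  have hprod : prod (onFirstTwo R (onLastTwo R (onFirstTwo R t))) =
      prod (onLastTwo R (onFirstTwo R (onLastTwo R t))) := by
    simp only [prod_onFirstTwo, prod_onLastTwo]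
  simp only [prod, hfst, hlast] at hprod
  have hmid := hφ (mul_left_cancel (mul_right_cancel hprod))
  exact Prod.ext (hfst t) (Prod.ext hmid (hlast t))

/-- The action of a map of pairs on the entries `i` and `i + 1` of a sequence. -/
def applyAt (R : V × V → V × V) (i : ℕ) (s : ℕ → V) : ℕ → V :=
  Function.update (Function.update s i (R (s i, s (i + 1))).1) (i + 1) (R (s i, s (i + 1))).2

section applyAt

variable (R : V × V → V × V) (i : ℕ) (s : ℕ → V)

@[simp] lemma applyAt_self : applyAt R i s i = (R (s i, s (i + 1))).1 := by
  simp [applyAt]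

@[simp] lemma applyAt_succ : applyAt R i s (i + 1) = (R (s i, s (i + 1))).2 := by
  simp [applyAt]

variable {i} in
lemma applyAt_of_ne {n : ℕ} (hi : n ≠ i) (hi' : n ≠ i + 1) : applyAt R i s n = s n := by
  simp [applyAt, hi, hi']

variable {R} in
lemma applyAt_leftInverse {T : V × V → V × V} (h : Function.LeftInverse T R) :
    Function.LeftInverse (applyAt T i) (applyAt R i) := by
  intro s
  ext n
  obtain rfl | hi := eq_or_ne n i
  · simp [h (s n, s (n + 1))]
  obtain rfl | hi' := eq_or_ne n (i + 1)
  · simp [h (s i, s (i + 1))]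
  simp only [applyAt_of_ne _ _ hi hi']

variable {i} in
lemma applyAt_comm {j : ℕ} (hij : i + 2 ≤ j) :
    applyAt R i (applyAt R j s) = applyAt R j (applyAt R i s) := by
  ext n
  simp only [applyAt, Function.update_apply]
  grind

/-- The three consecutive entries of a sequence starting at `i`, on which the braid relation
between the generators `i` and `i + 1` takes place. -/
def window (i : ℕ) (s : ℕ → V) : V × V × V :=
  (s i, s (i + 1), s (i + 2))

lemma window_applyAt : window i (applyAt R i s) = onFirstTwo R (window i s) := by
  simp [window, onFirstTwo, applyAt_of_ne]

lemma window_applyAt_succ : window i (applyAt R (i + 1) s) = onLastTwo R (window i s) := by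
  have hi : applyAt R (i + 1) s i = s i := applyAt_of_ne R s (by omega) (by omega)
  simp [window, onLastTwo, hi]

variable {R} in
lemma IsYangBaxter.applyAt_braid (hR : IsYangBaxter R) :
    applyAt R i (applyAt R (i + 1) (applyAt R i s)) =
      applyAt R (i + 1) (applyAt R i (applyAt R (i + 1) s)) := by
  have hwindow := hR (window i s)
  simp only [← window_applyAt, ← window_applyAt_succ] at hwindow
  simp only [window, Prod.mk.injEq] at hwindow
  obtain ⟨h₀, h₁, h₂⟩ := hwindow
  ext n
  obtain rfl | hi := eq_or_ne n i
  · exact h₀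
  obtain rfl | hi' := eq_or_ne n (i + 1)
  · exact h₁
  obtain rfl | hi'' := eq_or_ne n (i + 2)
  · exact h₂
  simp only [applyAt_of_ne _ _ hi hi', applyAt_of_ne R (i := i + 1) _ hi' hi'']

end applyAt

/-- `applyAt R i` as a permutation of the sequences. -/
def permAt (R : Perm (V × V)) (i : ℕ) : Perm (ℕ → V) where
  toFun := applyAt R i
  invFun := applyAt R.symm i
  left_inv := applyAt_leftInverse i R.left_inv
  right_inv := applyAt_leftInverse i R.right_inv

variable {R : Perm (V × V)}

lemma IsYangBaxter.lift_permAt_eq_one (hR : IsYangBaxter R) :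
    ∀ r ∈ braidRels, FreeGroup.lift (permAt R) r = 1 := by
  rintro _ (⟨i, j, hij, rfl⟩ | ⟨i, rfl⟩)
  · have hcomm : permAt R i * permAt R j = permAt R j * permAt R i :=
      Equiv.ext fun s ↦ applyAt_comm R s hij
    simp [hcomm]
  · have hbraid : permAt R i * permAt R (i + 1) * permAt R i =
        permAt R (i + 1) * permAt R i * permAt R (i + 1) :=
      Equiv.ext fun s ↦ hR.applyAt_braid i s
    simp only [map_mul, map_inv, FreeGroup.lift_apply_of, hbraid, mul_inv_cancel]

/-- The action of the braid group on sequences given by a bijective solution `R` of the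
Yang–Baxter equation: `σ i` applies `R` to the entries `i` and `i + 1`. -/
def IsYangBaxter.braidAction (hR : IsYangBaxter R) : Binf →* Perm (ℕ → V) :=
  PresentedGroup.toGroup hR.lift_permAt_eq_one

lemma IsYangBaxter.braidAction_σ (hR : IsYangBaxter R) (i : ℕ) :
    hR.braidAction (σ i) = permAt R i :=
  PresentedGroup.toGroup.of hR.lift_permAt_eq_one

lemma IsYangBaxter.braidAction_sh_apply_zero (hR : IsYangBaxter R) (β : Binf) (s : ℕ → V) :
    hR.braidAction (sh β) s 0 = s 0 := by
  have hβ : β ∈ Subgroup.closure (Set.range σ) :=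
    PresentedGroup.closure_range_of braidRels ▸ Subgroup.mem_top β
  induction hβ using Subgroup.closure_induction generalizing s with
  | mem _ hσ =>
    obtain ⟨i, rfl⟩ := hσ
    rw [sh_σ, hR.braidAction_σ]
    exact applyAt_of_ne R s (Nat.succ_ne_zero i).symm (Nat.succ_ne_zero (i + 1)).symm
  | one => simp
  | mul β₁ β₂ _ _ ih₁ ih₂ => simp [ih₁, ih₂]
  | inv β _ ih => simpa using (ih (hR.braidAction (sh β⁻¹) s)).symm

lemma inv_mul_sc (a x : Binf) : a⁻¹ * sc a x = sh x * σ 0 * (sh a)⁻¹ := by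
  simp only [sc]
  group

lemma IsYangBaxter.lt_braidAction_inv_mul_sc {α : Type*} [Preorder α] (hR : IsYangBaxter R)
    {h : V → α} (hlt : ∀ u v, h u < h (R (u, v)).1) (a x : Binf) (s : ℕ → V) :
    h (s 0) < h (hR.braidAction (a⁻¹ * sc a x) s 0) := by
  set t := hR.braidAction (sh a⁻¹) s with ht
  calc
    h (s 0) = h (t 0) := by rw [ht, hR.braidAction_sh_apply_zero]
    _ < h (R (t 0, t 1)).1 := hlt _ _
    _ = h (hR.braidAction (σ 0) t 0) := by
      rw [hR.braidAction_σ]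
      exact congrArg h (applyAt_self R 0 t).symm
    _ = h (hR.braidAction (a⁻¹ * sc a x) s 0) := by
      rw [inv_mul_sc, ← map_inv, mul_assoc, map_mul, Perm.mul_apply,
        hR.braidAction_sh_apply_zero, map_mul, Perm.mul_apply]

theorem IsYangBaxter.not_transGen_sc_self [Nonempty V] {α : Type*} [Preorder α]
    (hR : IsYangBaxter R) {h : V → α} (hlt : ∀ u v, h u < h (R (u, v)).1) (β : Binf) :
    ¬ Relation.TransGen (fun a b : Binf ↦ ∃ x, sc a x = b) β β := by
  obtain ⟨s⟩ : Nonempty (ℕ → V) := inferInstance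
  let rank (b : Binf) : α := h (hR.braidAction b⁻¹ s 0)
  have rank_lt : ∀ a b : Binf, (∃ x, sc a x = b) → rank b < rank a := by
    rintro a _ ⟨x, rfl⟩
    have hlt' := hR.lt_braidAction_inv_mul_sc hlt a x (hR.braidAction (sc a x)⁻¹ s)
    rwa [← Perm.mul_apply, ← map_mul, mul_inv_cancel_right] at hlt'
  intro hβ
  have hcycle := hβ.lift (p := (· > ·)) rank rank_lt
  rw [Relation.transGen_eq_self] at hcycle
  exact lt_irrefl _ hcycle

end YangBaxter

/-- A bounded interval `(lo, lo + len)` with `0 < lo`, encoding the position of a lamination near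
one puncture: `(lo + len, len / lo)` are Dynnikov's coordinates `(x, y)`, with the operations
`(max, +)` of the usual form replaced by `(+, *)`. -/
@[ext] structure PosInterval where
  lo : ℝ
  len : ℝ
  lo_pos : 0 < lo
  len_pos : 0 < len

namespace PosInterval

instance : Nonempty PosInterval :=
  ⟨⟨1, 1, one_pos, one_pos⟩⟩

/-- The affine map `t ↦ m t + (1 + m) (lo + len)`, with `m = len / lo`, by which an interval acts on
the next one. -/
noncomputable def affine (p : PosInterval) : Perm ℝ where
  toFun t := (p.len * t + (p.lo + p.len) ^ 2) / p.lo
  invFun t := (p.lo * t - (p.lo + p.len) ^ 2) / p.len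
  left_inv t := by
    have := p.lo_pos.ne'
    have := p.len_pos.ne'
    field_simp
    ring
  right_inv t := by
    have := p.lo_pos.ne'
    have := p.len_pos.ne'
    field_simp
    ring

lemma affine_apply (p : PosInterval) (t : ℝ) :
    p.affine t = (p.len * t + (p.lo + p.len) ^ 2) / p.lo := rfl

lemma affine_zero (p : PosInterval) : p.affine 0 = p.lo * (1 + p.len / p.lo) ^ 2 := by
  have := p.lo_pos.ne'
  rw [affine_apply]
  field_simp
  ring

lemma affine_sub_affine (p : PosInterval) (s t : ℝ) :
    p.affine s - p.affine t = p.len / p.lo * (s - t) := by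
  simp only [affine_apply]
  ring

lemma lo_lt_affine (p : PosInterval) {t : ℝ} (ht : 0 ≤ t) : p.lo < p.affine t := by
  have hlo := p.lo_pos
  have hlen := p.len_pos
  rw [affine_apply, lt_div_iff₀ hlo]
  nlinarith [mul_nonneg hlen.le ht, mul_pos hlo hlen]

lemma affine_injective : Function.Injective affine := by
  intro p q h
  have hslope : p.len / p.lo = q.len / q.lo := by
    have hp := affine_sub_affine p 1 0
    have hq := affine_sub_affine q 1 0
    rw [h] at hp
    linarith
  have hlo : p.lo = q.lo := by
    have hzero := affine_zero p
    have hm : 0 < 1 + q.len / q.lo := by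
      have := q.lo_pos
      have := q.len_pos
      positivity
    rw [h, affine_zero q, hslope] at hzero
    exact (mul_right_cancel₀ (pow_ne_zero 2 hm.ne') hzero).symm
  exact PosInterval.ext hlo ((div_left_inj' q.lo_pos.ne').1 (hlo ▸ hslope))

/-- The first component of the braiding of `p` and `q`: the image of `q` under the affine map of
`p`. -/
noncomputable def braidFst (p q : PosInterval) : PosInterval where
  lo := p.affine q.lo
  len := p.affine (q.lo + q.len) - p.affine q.lo
  lo_pos := p.lo_pos.trans (p.lo_lt_affine q.lo_pos.le)
  len_pos := by
    have := p.lo_pos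
    have := p.len_pos
    have := q.len_pos
    rw [affine_sub_affine, add_sub_cancel_left]
    positivity

lemma braidFst_lo (p q : PosInterval) : (braidFst p q).lo = p.affine q.lo := rfl

lemma braidFst_lo_add_len (p q : PosInterval) :
    (braidFst p q).lo + (braidFst p q).len = p.affine (q.lo + q.len) :=
  add_sub_cancel _ _

lemma braidFst_len (p q : PosInterval) : (braidFst p q).len = p.len / p.lo * q.len := by
  simp [braidFst, affine_sub_affine]

/-- The effect of a half-turn of the punctured plane, which inverts both Dynnikov coordinates and
reverses the order of the punctures. -/
noncomputable def rotate (p : PosInterval) : PosInterval where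
  lo := p.len / (p.lo + p.len) ^ 2
  len := p.lo / (p.lo + p.len) ^ 2
  lo_pos := by
    have := p.lo_pos
    have := p.len_pos
    positivity
  len_pos := by
    have := p.lo_pos
    have := p.len_pos
    positivity

lemma rotate_rotate (p : PosInterval) : p.rotate.rotate = p := by
  obtain ⟨x, y, hx, hy⟩ := p
  ext <;> simp only [rotate] <;> field_simp <;> ring

/-- The effect of the reflection of the plane in the line through the punctures, which inverts the
first Dynnikov coordinate and exchanges positive and negative crossings. -/
noncomputable def mirror (p : PosInterval) : PosInterval where
  lo := p.lo / (p.lo + p.len) ^ 2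
  len := p.len / (p.lo + p.len) ^ 2
  lo_pos := by
    have := p.lo_pos
    have := p.len_pos
    positivity
  len_pos := by
    have := p.lo_pos
    have := p.len_pos
    positivity

lemma mirror_mirror (p : PosInterval) : p.mirror.mirror = p := by
  obtain ⟨x, y, hx, hy⟩ := p
  ext <;> simp only [mirror] <;> field_simp

lemma rotate_mirror (p : PosInterval) : p.mirror.rotate = p.rotate.mirror := by
  obtain ⟨x, y, hx, hy⟩ := p
  ext <;> simp only [mirror, rotate] <;> field_simp <;> ring

/-- The second component of the braiding of `p` and `q`, defined so that the braiding is invariant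
under half-turns. -/
noncomputable def braidSnd (p q : PosInterval) : PosInterval :=
  (braidFst q.rotate p.rotate).rotate

lemma rotate_braidSnd (p q : PosInterval) :
    (braidSnd p q).rotate = braidFst q.rotate p.rotate :=
  rotate_rotate _

lemma rotate_braidFst (p q : PosInterval) :
    (braidFst p q).rotate = braidSnd q.rotate p.rotate := by
  simp only [braidSnd, rotate_rotate]

lemma affine_braidFst_mul_affine_braidSnd (p q : PosInterval) :
    (braidFst p q).affine * (braidSnd p q).affine = p.affine * q.affine := by
  ext t
  obtain ⟨x, y, hx, hy⟩ := p
  obtain ⟨z, w, hz, hw⟩ := q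
  simp only [Perm.mul_apply, braidSnd, rotate, braidFst_lo, braidFst_len, affine_apply]
  field_simp
  ring

lemma braidFst_braidFst (p q r : PosInterval) :
    braidFst (braidFst p q) (braidFst (braidSnd p q) r) = braidFst p (braidFst q r) := by
  have happly (t : ℝ) :
      (braidFst p q).affine ((braidSnd p q).affine t) = p.affine (q.affine t) :=
    DFunLike.congr_fun (affine_braidFst_mul_affine_braidSnd p q) t
  have hlo : (braidFst (braidFst p q) (braidFst (braidSnd p q) r)).lo =
      (braidFst p (braidFst q r)).lo := by
    simp only [braidFst_lo, happly]
  refine PosInterval.ext hlo (add_left_cancel (a := (braidFst p (braidFst q r)).lo) ?_)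
  nth_rw 1 [← hlo]
  simp only [braidFst_lo_add_len, happly]

lemma braidSnd_braidSnd (p q r : PosInterval) :
    braidSnd (braidSnd p q) r = braidSnd (braidSnd p (braidFst q r)) (braidSnd q r) := by
  have h := congrArg rotate (braidFst_braidFst r.rotate q.rotate p.rotate)
  simpa only [rotate_braidFst, rotate_braidSnd, rotate_rotate] using h.symm

lemma braidFst_mirror (p q : PosInterval) :
    braidFst (braidFst p q).mirror (braidSnd p q).mirror = p.mirror := by
  obtain ⟨x, y, hx, hy⟩ := p
  obtain ⟨z, w, hz, hw⟩ := q
  ext <;> simp only [braidSnd, rotate, mirror, braidFst_lo, braidFst_len, affine_apply] <;>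
    field_simp <;> ring

lemma braidSnd_mirror (p q : PosInterval) :
    braidSnd (braidFst p q).mirror (braidSnd p q).mirror = q.mirror := by
  calc
    _ = rotate
        (braidFst (braidFst q.rotate p.rotate).mirror (braidSnd q.rotate p.rotate).mirror) := by
      rw [← rotate_braidSnd, ← rotate_braidFst, ← rotate_mirror, ← rotate_mirror]
      rfl
    _ = q.mirror := by rw [braidFst_mirror, rotate_mirror, rotate_rotate]

/-- The action of an Artin generator on the coordinates of the two punctures it exchanges. The
inverse is the conjugate by `mirror`. -/
noncomputable def braiding : Perm (PosInterval × PosInterval) where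
  toFun t := (braidFst t.1 t.2, braidSnd t.1 t.2)
  invFun t := ((braidFst t.1.mirror t.2.mirror).mirror, (braidSnd t.1.mirror t.2.mirror).mirror)
  left_inv t := by simp only [braidFst_mirror, braidSnd_mirror, mirror_mirror]
  right_inv t := by simp only [braidFst_mirror, braidSnd_mirror, mirror_mirror]

lemma isYangBaxter_braiding : IsYangBaxter braiding :=
  .of_injective affine_injective (fun t ↦ affine_braidFst_mul_affine_braidSnd t.1 t.2)
    (fun t ↦ braidFst_braidFst t.1 t.2.1 t.2.2) (fun t ↦ braidSnd_braidSnd t.1 t.2.1 t.2.2)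

lemma lo_lt_lo_braiding (p q : PosInterval) : p.lo < (braiding (p, q)).1.lo :=
  p.lo_lt_affine q.lo_pos.le

end PosInterval

/-- division has no cycle in the braid shelf: the transitive
closure of the division relation is irreflexive. -/
theorem braid_division_acyclic (β : Binf) :
    ¬ Relation.TransGen (fun a b : Binf => ∃ x, sc a x = b) β β :=
  PosInterval.isYangBaxter_braiding.not_transGen_sc_self PosInterval.lo_lt_lo_braiding β
end
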